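/- Let 1 < p < ∞ and w ∈ A_p, and let M be the Hardy–Littlewood maximal operator. Suppose ψ₁ and ψ₂ are positive functions on ℝⁿ × (0,∞) for which there is a constant C > 0, independent of a and r, with sup_{r<t<∞} ψ₁(a,t) ≤ C·ψ₂(a,r) for every (a,r) ∈ ℝⁿ × (0,∞). Then M is bounded from M^{p,w}_{ψ₁} to M^{p,w}_{ψ₂}: there is C' > 0 such that ‖Mf‖_{M^{p,w}_{ψ₂}} ≤ C'·‖f‖_{M^{p,w}_{ψ₁}} for every f ∈ M^{p,w}_{ψ₁}. -/

import Mathlib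

open MeasureTheory Metric Set
open scoped ENNReal

noncomputable section

/-- The weighted measure of a set: `w(E) = ∫_E w(x) dx`, valued in `ℝ≥0∞`. -/
def wSet {n : ℕ} (w : EuclideanSpace ℝ (Fin n) → ℝ)
    (E : Set (EuclideanSpace ℝ (Fin n))) : ℝ≥0∞ :=
  ∫⁻ x in E, ENNReal.ofReal (w x)

/-- The weighted Lebesgue norm `‖f‖_{L^{p,w}(Ω)} = (∫_Ω |f(x)|^p w(x) dx)^{1/p}`. -/
def wLp {n : ℕ} (p : ℝ) (w f : EuclideanSpace ℝ (Fin n) → ℝ)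
    (Ω : Set (EuclideanSpace ℝ (Fin n))) : ℝ≥0∞ :=
  (∫⁻ x in Ω, ENNReal.ofReal |f x| ^ p * ENNReal.ofReal (w x)) ^ (1 / p)

/-- The weighted Lebesgue norm for an `ℝ≥0∞`-valued function. -/
def wLpE {n : ℕ} (p : ℝ) (w : EuclideanSpace ℝ (Fin n) → ℝ)
    (g : EuclideanSpace ℝ (Fin n) → ℝ≥0∞) (Ω : Set (EuclideanSpace ℝ (Fin n))) : ℝ≥0∞ :=
  (∫⁻ x in Ω, g x ^ p * ENNReal.ofReal (w x)) ^ (1 / p)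

/-- The weak weighted Lebesgue norm `‖f‖_{WL^{p,w}(Ω)} = sup_{γ>0} γ·w({x ∈ Ω : |f(x)| > γ})^{1/p}`. -/
def wWeakLp {n : ℕ} (p : ℝ) (w f : EuclideanSpace ℝ (Fin n) → ℝ)
    (Ω : Set (EuclideanSpace ℝ (Fin n))) : ℝ≥0∞ :=
  ⨆ γ : Set.Ioi (0 : ℝ),
    ENNReal.ofReal γ.1 * (wSet w {x | x ∈ Ω ∧ γ.1 < |f x|}) ^ (1 / p)

/-- The weak weighted Lebesgue norm for an `ℝ≥0∞`-valued function. -/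
def wWeakLpE {n : ℕ} (p : ℝ) (w : EuclideanSpace ℝ (Fin n) → ℝ)
    (g : EuclideanSpace ℝ (Fin n) → ℝ≥0∞) (Ω : Set (EuclideanSpace ℝ (Fin n))) : ℝ≥0∞ :=
  ⨆ γ : Set.Ioi (0 : ℝ),
    ENNReal.ofReal γ.1 * (wSet w {x | x ∈ Ω ∧ ENNReal.ofReal γ.1 < g x}) ^ (1 / p)

/-- `f ∈ L^{p,w}_loc`: `f` is measurable and `‖f‖_{L^{p,w}(B)} < ∞` on every ball. -/
def MemLocWLp {n : ℕ} (p : ℝ) (w f : EuclideanSpace ℝ (Fin n) → ℝ) : Prop :=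
  Measurable f ∧ ∀ (a : EuclideanSpace ℝ (Fin n)) (r : ℝ), 0 < r → wLp p w f (ball a r) < ⊤

/-- A weight: nonnegative, measurable, locally integrable, positive a.e. -/
def IsWeight {n : ℕ} (w : EuclideanSpace ℝ (Fin n) → ℝ) : Prop :=
  Measurable w ∧ (∀ x, 0 ≤ w x) ∧ LocallyIntegrable w volume ∧ ∀ᵐ x ∂volume, 0 < w x

/-- The Muckenhoupt class `A_p` for `1 < p`. -/
def MuckAp {n : ℕ} (p : ℝ) (w : EuclideanSpace ℝ (Fin n) → ℝ) : Prop :=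
  ∃ C : ℝ, 0 < C ∧ ∀ (a : EuclideanSpace ℝ (Fin n)) (r : ℝ), 0 < r →
    ((volume (ball a r))⁻¹ * ∫⁻ x in ball a r, ENNReal.ofReal (w x)) *
      ((volume (ball a r))⁻¹ *
        ∫⁻ x in ball a r, ENNReal.ofReal (w x ^ (-(1 / (p - 1))))) ^ (p - 1) ≤
      ENNReal.ofReal C

/-- The Muckenhoupt class `A_1`. -/
def MuckA1 {n : ℕ} (w : EuclideanSpace ℝ (Fin n) → ℝ) : Prop :=
  ∃ C : ℝ, 0 < C ∧ ∀ (a : EuclideanSpace ℝ (Fin n)) (r : ℝ), 0 < r →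
    ((volume (ball a r))⁻¹ * ∫⁻ x in ball a r, ENNReal.ofReal (w x)) *
      essSup (fun x => ENNReal.ofReal (w x)⁻¹) (volume.restrict (ball a r)) ≤
      ENNReal.ofReal C

/-- The class `A_{p,q}` for `1 < p`, where `p'` is the conjugate exponent of `p`. -/
def MuckApq {n : ℕ} (p q p' : ℝ) (w : EuclideanSpace ℝ (Fin n) → ℝ) : Prop :=
  ∃ C : ℝ, 0 < C ∧ ∀ (a : EuclideanSpace ℝ (Fin n)) (r : ℝ), 0 < r →
    ((volume (ball a r))⁻¹ * ∫⁻ x in ball a r, ENNReal.ofReal (w x ^ q)) ^ (1 / q) *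
      ((volume (ball a r))⁻¹ * ∫⁻ x in ball a r, ENNReal.ofReal (w x ^ (-p'))) ^ (1 / p') ≤
      ENNReal.ofReal C

/-- The class `A_{1,q}`. -/
def MuckA1q {n : ℕ} (q : ℝ) (w : EuclideanSpace ℝ (Fin n) → ℝ) : Prop :=
  ∃ C : ℝ, 0 < C ∧ ∀ (a : EuclideanSpace ℝ (Fin n)) (r : ℝ), 0 < r →
    ((volume (ball a r))⁻¹ * ∫⁻ x in ball a r, ENNReal.ofReal (w x ^ q)) ^ (1 / q) *
      essSup (fun x => ENNReal.ofReal (w x)⁻¹) (volume.restrict (ball a r)) ≤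
      ENNReal.ofReal C

/-- The Hardy–Littlewood maximal operator. -/
def HLMax {n : ℕ} (f : EuclideanSpace ℝ (Fin n) → ℝ)
    (x : EuclideanSpace ℝ (Fin n)) : ℝ≥0∞ :=
  ⨆ r : Set.Ioi (0 : ℝ), (volume (ball x r.1))⁻¹ * ∫⁻ y in ball x r.1, ENNReal.ofReal |f y|

/-- The fractional integral operator `I_α` (applied to `|f|`, valued in `ℝ≥0∞`). -/
def fracIntE {n : ℕ} (α : ℝ) (f : EuclideanSpace ℝ (Fin n) → ℝ)
    (x : EuclideanSpace ℝ (Fin n)) : ℝ≥0∞ :=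
  ∫⁻ y, ENNReal.ofReal |f y| / ENNReal.ofReal (dist x y ^ ((n : ℝ) - α))

/-- The fractional maximal operator `M_α`. -/
def fracMax {n : ℕ} (α : ℝ) (f : EuclideanSpace ℝ (Fin n) → ℝ)
    (x : EuclideanSpace ℝ (Fin n)) : ℝ≥0∞ :=
  ⨆ r : Set.Ioi (0 : ℝ),
    (volume (ball x r.1)) ^ (α / (n : ℝ) - 1) * ∫⁻ y in ball x r.1, ENNReal.ofReal |f y|

/-- The generalized weighted Morrey norm `‖f‖_{M^{p,w}_ψ}`. -/
def morreyNorm {n : ℕ} (p : ℝ) (w : EuclideanSpace ℝ (Fin n) → ℝ)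
    (ψ : EuclideanSpace ℝ (Fin n) → ℝ → ℝ) (f : EuclideanSpace ℝ (Fin n) → ℝ) : ℝ≥0∞ :=
  ⨆ (a : EuclideanSpace ℝ (Fin n)) (r : Set.Ioi (0 : ℝ)),
    (ENNReal.ofReal (ψ a r.1))⁻¹ * wSet w (ball a r.1) ^ (-(1 / p)) * wLp p w f (ball a r.1)

/-- The generalized weighted Morrey norm for an `ℝ≥0∞`-valued function. -/
def morreyNormE {n : ℕ} (p : ℝ) (w : EuclideanSpace ℝ (Fin n) → ℝ)
    (ψ : EuclideanSpace ℝ (Fin n) → ℝ → ℝ) (g : EuclideanSpace ℝ (Fin n) → ℝ≥0∞) : ℝ≥0∞ :=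
  ⨆ (a : EuclideanSpace ℝ (Fin n)) (r : Set.Ioi (0 : ℝ)),
    (ENNReal.ofReal (ψ a r.1))⁻¹ * wSet w (ball a r.1) ^ (-(1 / p)) * wLpE p w g (ball a r.1)

/-- The generalized weighted weak Morrey norm `‖f‖_{WM^{p,w}_ψ}`. -/
def morreyWeakNorm {n : ℕ} (p : ℝ) (w : EuclideanSpace ℝ (Fin n) → ℝ)
    (ψ : EuclideanSpace ℝ (Fin n) → ℝ → ℝ) (f : EuclideanSpace ℝ (Fin n) → ℝ) : ℝ≥0∞ :=
  ⨆ (a : EuclideanSpace ℝ (Fin n)) (r : Set.Ioi (0 : ℝ)),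
    (ENNReal.ofReal (ψ a r.1))⁻¹ * wSet w (ball a r.1) ^ (-(1 / p)) * wWeakLp p w f (ball a r.1)

/-- The generalized weighted weak Morrey norm for an `ℝ≥0∞`-valued function. -/
def morreyWeakNormE {n : ℕ} (p : ℝ) (w : EuclideanSpace ℝ (Fin n) → ℝ)
    (ψ : EuclideanSpace ℝ (Fin n) → ℝ → ℝ) (g : EuclideanSpace ℝ (Fin n) → ℝ≥0∞) : ℝ≥0∞ :=
  ⨆ (a : EuclideanSpace ℝ (Fin n)) (r : Set.Ioi (0 : ℝ)),
    (ENNReal.ofReal (ψ a r.1))⁻¹ * wSet w (ball a r.1) ^ (-(1 / p)) * wWeakLpE p w g (ball a r.1)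

end

/-!
By the Besicovitch covering theorem, the centered maximal operator `M_ν` of an arbitrary s-finite
measure `ν` is of weak type `(1, 1)`, hence bounded on `L^q(ν)` for `q > 1`, with a constant that
depends only on `q` and the space.

For an `A_p` weight `W` with dual weight `S = W ^ (-1 / (p - 1))`, write `ν = W dμ` and
`σ = S dμ`. Comparing averages over `B(x, r)` and `B(x, 3r)` gives Lerner's pointwise bound
`(M f) ^ (p - 1) ≤ K · M_ν ((M_σ (f / S)) ^ (p - 1) / W)`, and the boundedness of `M_ν` on
`L^{p/(p-1)}(ν)` and of `M_σ` on `L^p(σ)` yields Muckenhoupt's theorem.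

For the Morrey estimate on `B(a, r)`, an average of `f` over a ball `B(x, s)` with `x ∈ B(a, r)`
either has `s ≤ r` and only sees `f` on `B(a, 2r)`, where Muckenhoupt's theorem applies, or is
comparable to the average over the larger ball `B(a, 2s)`, where the `A_p` condition bounds the
`p`-th power of a `μ`-average by the `ν`-average of the `p`-th power.
-/

open scoped NNReal

section LayerCake

variable {α : Type*} [MeasurableSpace α] {μ : Measure α}

lemma lintegral_Ioi_ofReal_rpow_eq_top (s : ℝ) :
    ∫⁻ t in Ioi (0 : ℝ), ENNReal.ofReal (t ^ s) = ⊤ := by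
  by_contra h
  refine not_integrableOn_Ioi_rpow s ⟨by fun_prop, ?_⟩
  rw [hasFiniteIntegral_iff_ofReal]
  · exact lt_top_iff_ne_top.2 h
  · filter_upwards [ae_restrict_mem measurableSet_Ioi] with t ht
    exact Real.rpow_nonneg (mem_Ioi.1 ht).le s

lemma lintegral_ennreal_rpow_eq_lintegral_meas_lt_mul {F : α → ℝ≥0∞} (hF : Measurable F)
    {q : ℝ} (hq : 0 < q) :
    ∫⁻ x, F x ^ q ∂μ =
      ENNReal.ofReal q *
        ∫⁻ t in Ioi (0 : ℝ), μ {x | ENNReal.ofReal t < F x} * ENNReal.ofReal (t ^ (q - 1)) := by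
  by_cases hfin : μ {x | F x = ⊤} = 0
  · have hF_ae : ∀ᵐ x ∂μ, F x ≠ ⊤ := by simpa [ae_iff] using hfin
    have hlayer := lintegral_rpow_eq_lintegral_meas_lt_mul μ
      (ae_of_all _ fun x => (F x).toReal_nonneg) hF.ennreal_toReal.aemeasurable hq
    have hleft : ∫⁻ x, ENNReal.ofReal ((F x).toReal ^ q) ∂μ = ∫⁻ x, F x ^ q ∂μ := by
      refine lintegral_congr_ae (hF_ae.mono fun x hx => ?_)
      simp only [← ENNReal.ofReal_rpow_of_nonneg ENNReal.toReal_nonneg hq.le,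
        ENNReal.ofReal_toReal hx]
    have hlevel {t : ℝ} (ht : 0 < t) :
        μ {x | t < (F x).toReal} = μ {x | ENNReal.ofReal t < F x} :=
      measure_congr <| hF_ae.mono fun x hx =>
        propext (ENNReal.ofReal_lt_iff_lt_toReal ht.le hx).symm
    rw [← hleft, hlayer]
    congr 1
    refine setLIntegral_congr_fun measurableSet_Ioi fun t ht => ?_
    simp only [hlevel (mem_Ioi.1 ht)]
  · have hleft : ∫⁻ x, F x ^ q ∂μ = ⊤ := by
      by_contra h
      refine hfin (measure_mono_null (fun x (hx : F x = ⊤) => ?_)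
        (ae_iff.1 (ae_lt_top (hF.pow_const q) h)))
      simp [hx, hq]
    have hright : ∫⁻ t in Ioi (0 : ℝ),
        μ {x | ENNReal.ofReal t < F x} * ENNReal.ofReal (t ^ (q - 1)) = ⊤ := by
      refine top_le_iff.1 ?_
      calc (⊤ : ℝ≥0∞)
          = ∫⁻ t in Ioi (0 : ℝ), μ {x | F x = ⊤} * ENNReal.ofReal (t ^ (q - 1)) := by
            rw [lintegral_const_mul _ (by fun_prop), lintegral_Ioi_ofReal_rpow_eq_top,
              ENNReal.mul_top hfin]
        _ ≤ _ := by
            gcongr with t x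
            intro hx
            rw [hx]
            exact ENNReal.ofReal_lt_top
    rw [hleft, hright, ENNReal.mul_top (by simpa using hq)]

lemma ofReal_mul_lintegral_setLIntegral_lt_mul {f : α → ℝ≥0∞} (hf : Measurable f) {q : ℝ}
    (hq : 1 < q) (c : ℝ≥0∞) :
    ENNReal.ofReal (q - 1) * ∫⁻ t in Ioi (0 : ℝ),
        (∫⁻ x in {x | ENNReal.ofReal t < c * f x}, f x ∂μ) * ENNReal.ofReal (t ^ (q - 1 - 1)) =
      c ^ (q - 1) * ∫⁻ x, f x ^ q ∂μ := by
  have hq₁ : 0 < q - 1 := sub_pos.2 hq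
  have hcf : Measurable fun x => c * f x := hf.const_mul c
  have hlevel (t : ℝ) : ∫⁻ x in {x | ENNReal.ofReal t < c * f x}, f x ∂μ =
      μ.withDensity f {x | ENNReal.ofReal t < c * f x} :=
    (withDensity_apply _ (measurableSet_lt measurable_const hcf)).symm
  simp only [hlevel]
  rw [← lintegral_ennreal_rpow_eq_lintegral_meas_lt_mul hcf hq₁,
    lintegral_withDensity_eq_lintegral_mul _ hf (hcf.pow_const _),
    ← lintegral_const_mul _ (hf.pow_const q)]
  refine lintegral_congr fun x => ?_
  have hsplit : f x ^ q = f x * f x ^ (q - 1) := by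
    conv_lhs => rw [← add_sub_cancel 1 q, ENNReal.rpow_add_of_nonneg _ _ zero_le_one hq₁.le,
      ENNReal.rpow_one]
  rw [Pi.mul_apply, ENNReal.mul_rpow_of_nonneg _ _ hq₁.le, hsplit]
  ring

lemma lintegral_rpow_le_of_mul_meas_lt_le {F f : α → ℝ≥0∞} (hF : Measurable F) (hf : Measurable f)
    {q : ℝ} (hq : 1 < q) {A c : ℝ≥0∞} (hA : A ≠ ⊤)
    (hweak : ∀ t : ℝ, 0 < t → ENNReal.ofReal t * μ {x | ENNReal.ofReal t < F x} ≤
      A * ∫⁻ x in {x | ENNReal.ofReal t < c * f x}, f x ∂μ) :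
    ∫⁻ x, F x ^ q ∂μ ≤
      ENNReal.ofReal q * A * (c ^ (q - 1) / ENNReal.ofReal (q - 1)) * ∫⁻ x, f x ^ q ∂μ := by
  calc ∫⁻ x, F x ^ q ∂μ
      = ENNReal.ofReal q * ∫⁻ t in Ioi (0 : ℝ),
          μ {x | ENNReal.ofReal t < F x} * ENNReal.ofReal (t ^ (q - 1)) :=
        lintegral_ennreal_rpow_eq_lintegral_meas_lt_mul hF (zero_lt_one.trans hq)
    _ ≤ ENNReal.ofReal q * ∫⁻ t in Ioi (0 : ℝ), A *
          ((∫⁻ x in {x | ENNReal.ofReal t < c * f x}, f x ∂μ) *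
            ENNReal.ofReal (t ^ (q - 1 - 1))) := by
        gcongr ENNReal.ofReal q * ?_
        refine setLIntegral_mono' measurableSet_Ioi fun t ht => ?_
        have hpow : ENNReal.ofReal (t ^ (q - 1)) =
            ENNReal.ofReal t * ENNReal.ofReal (t ^ (q - 1 - 1)) := by
          rw [← ENNReal.ofReal_mul (mem_Ioi.1 ht).le, mul_comm,
            ← Real.rpow_add_one (mem_Ioi.1 ht).ne', sub_add_cancel]
        rw [hpow, ← mul_assoc, ← mul_assoc, mul_comm (μ _)]
        gcongr ?_ * _
        exact hweak t ht
    _ = ENNReal.ofReal q * A * (c ^ (q - 1) / ENNReal.ofReal (q - 1)) * ∫⁻ x, f x ^ q ∂μ := by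
        rw [lintegral_const_mul' _ _ hA, mul_assoc, mul_assoc, ← ENNReal.mul_div_right_comm,
          ← ofReal_mul_lintegral_setLIntegral_lt_mul hf hq c,
          mul_div_assoc, ENNReal.mul_div_cancel (by simpa using hq) ENNReal.ofReal_ne_top]

end LayerCake

section CenteredMaximal

/-- The centered maximal function of `f` with respect to an arbitrary measure `μ`: the supremum of
the `μ`-averages of `f` over the open balls centered at a point. The average over a ball of measure
`0` or `∞` is `0`. -/
noncomputable def centeredMaximal {α : Type*} [PseudoMetricSpace α] [MeasurableSpace α]
    (μ : Measure α) (f : α → ℝ≥0∞) (x : α) : ℝ≥0∞ :=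
  ⨆ (r : ℝ) (_ : 0 < r), ⨍⁻ y in ball x r, f y ∂μ

section PseudoMetricSpace

variable {α : Type*} [PseudoMetricSpace α] [MeasurableSpace α] {μ : Measure α} {f g : α → ℝ≥0∞}

lemma laverage_ball_le_centeredMaximal (μ : Measure α) (f : α → ℝ≥0∞) (x : α) {r : ℝ}
    (hr : 0 < r) : ⨍⁻ y in ball x r, f y ∂μ ≤ centeredMaximal μ f x :=
  le_iSup₂ (f := fun (s : ℝ) (_ : 0 < s) => ⨍⁻ y in ball x s, f y ∂μ) r hr

lemma lt_centeredMaximal_iff {x : α} {t : ℝ≥0∞} :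
    t < centeredMaximal μ f x ↔ ∃ r, 0 < r ∧ t < ⨍⁻ y in ball x r, f y ∂μ := by
  simp only [centeredMaximal, lt_iSup_iff, exists_prop]

lemma centeredMaximal_le_add_const (c : ℝ≥0∞) (h : ∀ x, f x ≤ g x + c) (x : α) :
    centeredMaximal μ f x ≤ centeredMaximal μ g x + c := by
  refine iSup₂_le fun r hr => ?_
  calc ⨍⁻ y in ball x r, f y ∂μ
      ≤ ⨍⁻ y in ball x r, (g y + c) ∂μ := laverage_mono_ae (ae_of_all _ h)
    _ = ⨍⁻ y in ball x r, g y ∂μ + c * μ (ball x r) / μ (ball x r) := by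
        rw [setLAverage_eq, setLAverage_eq, lintegral_add_right _ measurable_const,
          setLIntegral_const, ENNReal.add_div]
    _ ≤ centeredMaximal μ g x + c := by
        gcongr
        · exact laverage_ball_le_centeredMaximal μ g x hr
        · exact ENNReal.div_le_of_le_mul le_rfl

lemma centeredMaximal_eq_iSup_rat (μ : Measure α) (f : α → ℝ≥0∞) (x : α) :
    centeredMaximal μ f x = ⨆ q : {q : ℚ // 0 < q}, ⨍⁻ y in ball x (q : ℚ), f y ∂μ := by
  refine le_antisymm (iSup₂_le fun r _ => ?_) (iSup_le fun q =>
    laverage_ball_le_centeredMaximal μ f x (Rat.cast_pos.2 q.2))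
  let ι := {q : ℚ // 0 < q ∧ (q : ℝ) < r}
  have hball : ball x r = ⋃ q : ι, ball x (q : ℚ) := by
    refine Subset.antisymm (fun y hy => ?_) (iUnion_subset fun q => ball_subset_ball q.2.2.le)
    obtain ⟨q, hyq, hqr⟩ := exists_rat_btwn (mem_ball.1 hy)
    exact mem_iUnion.2 ⟨⟨q, Rat.cast_pos.1 (dist_nonneg.trans_lt hyq), hqr⟩, hyq⟩
  have hdir : Directed (· ⊆ ·) fun q : ι => ball x (q : ℚ) :=
    Monotone.directed_le fun p q hpq => ball_subset_ball (Rat.cast_le.2 hpq)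
  calc ⨍⁻ y in ball x r, f y ∂μ
      = ⨆ q : ι, (∫⁻ y in ball x (q : ℚ), f y ∂μ) / μ (ball x r) := by
        rw [setLAverage_eq, ← ENNReal.iSup_div, ← setLIntegral_iUnion_of_directed f hdir, ← hball]
    _ ≤ ⨆ q : {q : ℚ // 0 < q}, ⨍⁻ y in ball x (q : ℚ), f y ∂μ := by
        refine iSup_le fun q => le_iSup_of_le ⟨q, q.2.1⟩ ?_
        rw [setLAverage_eq]
        gcongr
        exact q.2.2.le

variable [OpensMeasurableSpace α] [SecondCountableTopology α]

lemma mul_measure_biUnion_ball_le_lintegral {ι : Type*} {t : ℝ≥0∞} {s : Set ι} {c : ι → α}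
    {r : ι → ℝ} (hr : ∀ i ∈ s, 0 < r i)
    (hs : s.PairwiseDisjoint fun i => ball (c i) (r i))
    (ht : ∀ i ∈ s, t ≤ ⨍⁻ y in ball (c i) (r i), f y ∂μ) :
    t * μ (⋃ i ∈ s, ball (c i) (r i)) ≤ ∫⁻ x, f x ∂μ := by
  have hcount : s.Countable := hs.countable_of_isOpen (fun _ _ => isOpen_ball)
    fun i hi => ⟨c i, mem_ball_self (hr i hi)⟩
  rw [measure_biUnion hcount hs fun _ _ => measurableSet_ball, ← ENNReal.tsum_mul_left]
  calc ∑' i : s, t * μ (ball (c i) (r i))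
      ≤ ∑' i : s, ∫⁻ y in ball (c i) (r i), f y ∂μ :=
        ENNReal.tsum_le_tsum fun i => ENNReal.mul_le_of_le_div <| by
          simpa only [setLAverage_eq] using ht i i.2
    _ = ∫⁻ y in ⋃ i ∈ s, ball (c i) (r i), f y ∂μ :=
        (lintegral_biUnion hcount (fun _ _ => measurableSet_ball) hs f).symm
    _ ≤ ∫⁻ x, f x ∂μ := setLIntegral_le_lintegral _ _

variable [SFinite μ]

lemma measurable_lintegral_ball (hf : Measurable f) (r : ℝ) :
    Measurable fun x => ∫⁻ y in ball x r, f y ∂μ := by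
  have hball : MeasurableSet {z : α × α | dist z.2 z.1 < r} :=
    measurableSet_lt (by fun_prop) measurable_const
  convert ((hf.comp measurable_snd).indicator hball).lintegral_prod_right' (ν := μ) using 2 with x
  rw [← lintegral_indicator measurableSet_ball]
  rfl

lemma measurable_centeredMaximal (hf : Measurable f) : Measurable (centeredMaximal μ f) := by
  rw [funext (centeredMaximal_eq_iSup_rat μ f)]
  refine Measurable.iSup fun q => ?_
  have hball : Measurable fun x => μ (ball x (q : ℚ)) := by
    simpa only [Pi.one_apply, setLIntegral_one] using
      measurable_lintegral_ball (μ := μ) measurable_one ((q : ℚ) : ℝ)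
  simp only [setLAverage_eq]
  exact (measurable_lintegral_ball hf _).div hball

end PseudoMetricSpace

section Besicovitch

variable (α : Type*) [MetricSpace α] [HasBesicovitchCovering α] [SecondCountableTopology α]
  [MeasurableSpace α] [OpensMeasurableSpace α]

lemma exists_mul_measure_le_lintegral_of_le_laverage_ball :
    ∃ N : ℕ, ∀ (μ : Measure α) (f : α → ℝ≥0∞) (t : ℝ≥0∞) (A : Set α) (R : ℝ),
      (∀ x ∈ A, ∃ r, 0 < r ∧ r ≤ R ∧ t ≤ ⨍⁻ y in ball x r, f y ∂μ) →
        t * μ A ≤ N * ∫⁻ x, f x ∂μ := by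
  obtain ⟨N, τ, hτ, hN⟩ := HasBesicovitchCovering.no_satelliteConfig (α := α)
  refine ⟨N, fun μ f t A R hA => ?_⟩
  choose! r hr_pos hr_le hr using hA
  let balls : Besicovitch.BallPackage A α :=
    { c := (↑)
      r := fun x => r x
      rpos := fun x => hr_pos x x.2
      r_bound := R
      r_le := fun x => hr_le x x.2 }
  obtain ⟨s, hs, hcover⟩ := Besicovitch.exist_disjoint_covering_families hτ hN balls
  have hfamily (i : Fin N) : t * μ (⋃ j ∈ s i, ball (j : α) (r j)) ≤ ∫⁻ x, f x ∂μ :=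
    mul_measure_biUnion_ball_le_lintegral (fun j _ => hr_pos j j.2)
      ((hs i).mono fun _ => ball_subset_closedBall) fun j _ => hr j j.2
  calc t * μ A
      ≤ t * ∑ i : Fin N, μ (⋃ j ∈ s i, ball (j : α) (r j)) := by
        gcongr
        refine (measure_mono fun x hx => hcover ⟨⟨x, hx⟩, rfl⟩).trans ?_
        exact measure_iUnion_fintype_le μ _
    _ ≤ ∑ _i : Fin N, ∫⁻ x, f x ∂μ := by
        rw [Finset.mul_sum]
        exact Finset.sum_le_sum fun i _ => hfamily i
    _ = N * ∫⁻ x, f x ∂μ := by simp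

lemma exists_mul_meas_lt_centeredMaximal_le :
    ∃ N : ℕ, ∀ (μ : Measure α) (f : α → ℝ≥0∞) (t : ℝ≥0∞),
      t * μ {x | t < centeredMaximal μ f x} ≤ N * ∫⁻ x, f x ∂μ := by
  obtain ⟨N, hN⟩ := exists_mul_measure_le_lintegral_of_le_laverage_ball α
  refine ⟨N, fun μ f t => ?_⟩
  let A (R : ℕ) : Set α := {x | ∃ r : ℝ, 0 < r ∧ r ≤ R ∧ t < ⨍⁻ y in ball x r, f y ∂μ}
  have hA_mono : Monotone A := fun R R' hR x ⟨r, hr, hrR, ht⟩ =>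
    ⟨r, hr, hrR.trans (Nat.cast_le.2 hR), ht⟩
  have hA : {x | t < centeredMaximal μ f x} ⊆ ⋃ R, A R := fun x hx => by
    obtain ⟨r, hr, ht⟩ := lt_centeredMaximal_iff.1 hx
    obtain ⟨R, hR⟩ := exists_nat_ge r
    exact mem_iUnion.2 ⟨R, r, hr, hR, ht⟩
  calc t * μ {x | t < centeredMaximal μ f x}
      ≤ t * μ (⋃ R, A R) := by gcongr
    _ = ⨆ R, t * μ (A R) := by rw [hA_mono.measure_iUnion, ENNReal.mul_iSup]
    _ ≤ N * ∫⁻ x, f x ∂μ := iSup_le fun R =>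
        hN μ f t (A R) R fun _ ⟨r, hr, hrR, ht⟩ => ⟨r, hr, hrR, ht.le⟩

lemma exists_mul_meas_lt_centeredMaximal_le_setLIntegral :
    ∃ A : ℝ≥0, ∀ (μ : Measure α) (f : α → ℝ≥0∞), Measurable f → ∀ t : ℝ≥0∞,
      t * μ {x | t < centeredMaximal μ f x} ≤ A * ∫⁻ x in {x | t < 2 * f x}, f x ∂μ := by
  obtain ⟨N, hN⟩ := exists_mul_meas_lt_centeredMaximal_le α
  refine ⟨2 * N, fun μ f hf t => ?_⟩
  let g := {x | t < 2 * f x}.indicator f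
  have hfg (x : α) : f x ≤ g x + t / 2 := by
    by_cases hx : t < 2 * f x
    · simp only [g, indicator_of_mem (show x ∈ {x | t < 2 * f x} from hx), le_self_add]
    · refine le_add_left ((ENNReal.le_div_iff_mul_le (by simp) (by simp)).2 ?_)
      rw [mul_comm]
      exact not_lt.1 hx
  have hlevel : {x | t < centeredMaximal μ f x} ⊆ {x | t / 2 < centeredMaximal μ g x} := by
    intro x (hx : t < centeredMaximal μ f x)
    by_contra! hgx
    refine hx.not_ge ((centeredMaximal_le_add_const _ hfg x).trans ?_)
    exact (add_le_add_left (not_lt.1 hgx) _).trans (ENNReal.add_halves t).le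
  calc t * μ {x | t < centeredMaximal μ f x}
      ≤ 2 * (t / 2 * μ {x | t / 2 < centeredMaximal μ g x}) := by
        rw [← mul_assoc, ENNReal.mul_div_cancel (by simp) (by simp)]
        gcongr
    _ ≤ 2 * (N * ∫⁻ x, g x ∂μ) := by gcongr 2 * ?_; exact hN μ g (t / 2)
    _ = (2 * N : ℝ≥0) * ∫⁻ x in {x | t < 2 * f x}, f x ∂μ := by
        rw [lintegral_indicator (measurableSet_lt measurable_const (hf.const_mul 2))]
        push_cast
        ring

lemma exists_lintegral_centeredMaximal_rpow_le {q : ℝ} (hq : 1 < q) :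
    ∃ K : ℝ≥0, ∀ (μ : Measure α) [SFinite μ] (f : α → ℝ≥0∞), Measurable f →
      ∫⁻ x, centeredMaximal μ f x ^ q ∂μ ≤ K * ∫⁻ x, f x ^ q ∂μ := by
  obtain ⟨A, hA⟩ := exists_mul_meas_lt_centeredMaximal_le_setLIntegral α
  have hK : ENNReal.ofReal q * A * (2 ^ (q - 1) / ENNReal.ofReal (q - 1)) ≠ ⊤ := by
    have : ENNReal.ofReal (q - 1) ≠ 0 := by simpa using hq
    finiteness
  lift ENNReal.ofReal q * A * (2 ^ (q - 1) / ENNReal.ofReal (q - 1)) to ℝ≥0 using hK with K hKeq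
  refine ⟨K, fun μ _ f hf => hKeq ▸ ?_⟩
  exact lintegral_rpow_le_of_mul_meas_lt_le (measurable_centeredMaximal hf) hf hq
    ENNReal.coe_ne_top fun t _ => hA μ f hf _

end Besicovitch

end CenteredMaximal

section DualWeight

variable {α : Type*} {W : α → ℝ≥0} {p : ℝ}

/-- The weight `W ^ (-1 / (p - 1))` dual to `W` in the `A_p` condition. It vanishes where `W`
does. -/
noncomputable def dualWeight (p : ℝ) (W : α → ℝ≥0) (x : α) : ℝ≥0 :=
  W x ^ (-(1 / (p - 1)))

lemma coe_dualWeight {x : α} (hx : W x ≠ 0) :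
    (dualWeight p W x : ℝ≥0∞) = (W x : ℝ≥0∞) ^ (-(1 / (p - 1))) :=
  ENNReal.coe_rpow_of_ne_zero hx _

lemma dualWeight_ne_zero {x : α} (hx : W x ≠ 0) : dualWeight p W x ≠ 0 := by
  simp [dualWeight, NNReal.rpow_eq_zero_iff, hx]

lemma dualWeight_rpow {x : α} (hp : 1 < p) (hx : W x ≠ 0) :
    (dualWeight p W x : ℝ≥0∞) ^ (1 - p) = W x := by
  have hp₁ : p - 1 ≠ 0 := (sub_pos.2 hp).ne'
  rw [coe_dualWeight hx, ← ENNReal.rpow_mul,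
    show -(1 / (p - 1)) * (1 - p) = 1 by field_simp; ring, ENNReal.rpow_one]

variable [MeasurableSpace α] {μ : Measure α}

/-- The measure `W dμ` attached to a weight `W`. -/
noncomputable abbrev weightedMeasure (μ : Measure α) (W : α → ℝ≥0) : Measure α :=
  μ.withDensity fun x => (W x : ℝ≥0∞)

lemma lintegral_weightedMeasure (hW : Measurable W) (g : α → ℝ≥0∞) :
    ∫⁻ x, g x ∂weightedMeasure μ W = ∫⁻ x, W x * g x ∂μ :=
  lintegral_withDensity_eq_lintegral_mul_non_measurable _ hW.coe_nnreal_ennreal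
    (ae_of_all _ fun _ => ENNReal.coe_lt_top) g

lemma restrict_weightedMeasure {s : Set α} (hs : MeasurableSet s) :
    (weightedMeasure μ W).restrict s = weightedMeasure (μ.restrict s) W :=
  restrict_withDensity hs _

lemma lintegral_weightedMeasure_div (hW : Measurable W) (hW₀ : ∀ᵐ x ∂μ, W x ≠ 0) (f : α → ℝ≥0∞) :
    ∫⁻ x, f x / W x ∂weightedMeasure μ W = ∫⁻ x, f x ∂μ := by
  rw [lintegral_weightedMeasure hW]
  refine lintegral_congr_ae (hW₀.mono fun x hx => ?_)
  exact ENNReal.mul_div_cancel (ENNReal.coe_ne_zero.2 hx) ENNReal.coe_ne_top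

lemma measurable_dualWeight (hW : Measurable W) : Measurable (dualWeight p W) :=
  hW.pow_const _

lemma lintegral_div_dualWeight_rpow (hW : Measurable W) (hW₀ : ∀ᵐ x ∂μ, W x ≠ 0) (hp : 1 < p)
    (f : α → ℝ≥0∞) :
    ∫⁻ x, (f x / dualWeight p W x) ^ p ∂weightedMeasure μ (dualWeight p W) =
      ∫⁻ x, f x ^ p ∂weightedMeasure μ W := by
  rw [lintegral_weightedMeasure (measurable_dualWeight hW), lintegral_weightedMeasure hW]
  refine lintegral_congr_ae (hW₀.mono fun x hx => ?_)
  have hS : (dualWeight p W x : ℝ≥0∞) ≠ 0 := ENNReal.coe_ne_zero.2 (dualWeight_ne_zero hx)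
  calc (dualWeight p W x : ℝ≥0∞) * (f x / dualWeight p W x) ^ p
      = (dualWeight p W x : ℝ≥0∞) ^ (1 : ℝ) * (dualWeight p W x : ℝ≥0∞) ^ (-p) * f x ^ p := by
        rw [ENNReal.div_rpow_of_nonneg _ _ (by positivity), ENNReal.rpow_one, ENNReal.rpow_neg,
          div_eq_mul_inv]
        ring
    _ = W x * f x ^ p := by
        rw [← ENNReal.rpow_add _ _ hS ENNReal.coe_ne_top, ← sub_eq_add_neg, dualWeight_rpow hp hx]

lemma lintegral_rpow_div_weight_rpow (hW : Measurable W) (hW₀ : ∀ᵐ x ∂μ, W x ≠ 0) (hp : 1 < p)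
    (h : α → ℝ≥0∞) :
    ∫⁻ x, (h x ^ (p - 1) / W x) ^ (p / (p - 1)) ∂weightedMeasure μ W =
      ∫⁻ x, h x ^ p ∂weightedMeasure μ (dualWeight p W) := by
  have hp₁ : 0 < p - 1 := sub_pos.2 hp
  rw [lintegral_weightedMeasure (measurable_dualWeight hW), lintegral_weightedMeasure hW]
  refine lintegral_congr_ae (hW₀.mono fun x hx => ?_)
  have hWx : (W x : ℝ≥0∞) ≠ 0 := ENNReal.coe_ne_zero.2 hx
  calc (W x : ℝ≥0∞) * (h x ^ (p - 1) / W x) ^ (p / (p - 1))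
      = (W x : ℝ≥0∞) ^ (1 : ℝ) * (W x : ℝ≥0∞) ^ (-(p / (p - 1))) * h x ^ p := by
        rw [ENNReal.div_rpow_of_nonneg _ _ (by positivity), ENNReal.rpow_one, ENNReal.rpow_neg,
          ← ENNReal.rpow_mul, mul_div_cancel₀ _ hp₁.ne', div_eq_mul_inv]
        ring
    _ = dualWeight p W x * h x ^ p := by
        rw [← ENNReal.rpow_add _ _ hWx ENNReal.coe_ne_top, coe_dualWeight hx]
        congr 2
        field_simp
        ring

lemma lintegral_rpow_le_mul_dualWeight_rpow (hW : Measurable W) (hW₀ : ∀ᵐ x ∂μ, W x ≠ 0)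
    (hp : 1 < p) {f : α → ℝ≥0∞} (hf : Measurable f) :
    (∫⁻ x, f x ∂μ) ^ p ≤
      (∫⁻ x, f x ^ p ∂weightedMeasure μ W) * (∫⁻ x, dualWeight p W x ∂μ) ^ (p - 1) := by
  have hp₀ : 0 < p := zero_lt_one.trans hp
  have hS := measurable_dualWeight (p := p) hW
  set σ := weightedMeasure μ (dualWeight p W)
  have hσ : ∫⁻ _, 1 ∂σ = ∫⁻ x, dualWeight p W x ∂μ := by
    simp only [σ, lintegral_weightedMeasure hS, mul_one]
  have hholder : ∫⁻ x, f x / dualWeight p W x ∂σ ≤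
      (∫⁻ x, (f x / dualWeight p W x) ^ p ∂σ) ^ (1 / p) * (∫⁻ _, 1 ∂σ) ^ (1 / p.conjExponent) := by
    simpa using ENNReal.lintegral_mul_le_Lp_mul_Lq σ (Real.HolderConjugate.conjExponent hp)
      (hf.div hS.coe_nnreal_ennreal).aemeasurable (aemeasurable_const (b := 1))
  rw [lintegral_weightedMeasure_div hS (hW₀.mono fun _ => dualWeight_ne_zero),
    lintegral_div_dualWeight_rpow hW hW₀ hp, hσ] at hholder
  refine (ENNReal.rpow_le_rpow hholder hp₀.le).trans_eq ?_
  rw [ENNReal.mul_rpow_of_nonneg _ _ hp₀.le, ← ENNReal.rpow_mul, ← ENNReal.rpow_mul,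
    one_div_mul_cancel hp₀.ne', ENNReal.rpow_one, Real.conjExponent]
  congr 2
  field_simp

end DualWeight

section ApWeight

section PseudoMetricSpace

variable {X : Type*} [PseudoMetricSpace X] [MeasurableSpace X]

lemma lintegral_ball_le_mul_centeredMaximal (μ : Measure X) (f : X → ℝ≥0∞) {x y : X} {r : ℝ}
    (hy : y ∈ ball x r) (hμ : μ (ball x (3 * r)) ≠ ⊤) :
    ∫⁻ z in ball x r, f z ∂μ ≤ μ (ball x (3 * r)) * centeredMaximal μ f y := by
  have hr : 0 < r := pos_of_mem_ball hy
  have hyx : dist y x < r := hy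
  have hsub : ball x r ⊆ ball y (2 * r) := ball_subset_ball' (by rw [dist_comm]; linarith)
  have hsub' : ball y (2 * r) ⊆ ball x (3 * r) := ball_subset_ball' (by linarith)
  calc ∫⁻ z in ball x r, f z ∂μ
      ≤ ∫⁻ z in ball y (2 * r), f z ∂μ := lintegral_mono_set hsub
    _ = μ (ball y (2 * r)) * ⨍⁻ z in ball y (2 * r), f z ∂μ :=
        (measure_mul_setLAverage f (measure_ne_top_of_subset hsub' hμ)).symm
    _ ≤ μ (ball x (3 * r)) * centeredMaximal μ f y := by
        gcongr
        exact laverage_ball_le_centeredMaximal μ f y (by positivity)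

/-- `W` is an `A_p` weight with constant `C` with respect to `μ`: the product of the average of `W`
and the `(p - 1)`-st power of the average of its dual weight is at most `C` on every ball. Local
integrability is required in the form of finiteness of the integral of `W` over balls. -/
structure IsApWeight (p : ℝ) (C : ℝ≥0) (μ : Measure X) (W : X → ℝ≥0) : Prop where
  one_lt : 1 < p
  measurable : Measurable W
  ae_ne_zero : ∀ᵐ x ∂μ, W x ≠ 0
  lintegral_ball_ne_top : ∀ a r, ∫⁻ x in ball a r, W x ∂μ ≠ ⊤
  laverage_mul_rpow_le : ∀ a r, 0 < r →
    (⨍⁻ x in ball a r, W x ∂μ) * (⨍⁻ x in ball a r, dualWeight p W x ∂μ) ^ (p - 1) ≤ C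

namespace IsApWeight

variable {p : ℝ} {C : ℝ≥0} {μ : Measure X} {W : X → ℝ≥0}

lemma weightedMeasure_ball_ne_top [OpensMeasurableSpace X] (h : IsApWeight p C μ W) (a : X)
    (r : ℝ) : weightedMeasure μ W (ball a r) ≠ ⊤ := by
  rw [withDensity_apply _ measurableSet_ball]
  exact h.lintegral_ball_ne_top a r

variable [μ.IsOpenPosMeasure]

lemma weightedMeasure_ball_ne_zero (h : IsApWeight p C μ W) (a : X) {r : ℝ} (hr : 0 < r) :
    weightedMeasure μ W (ball a r) ≠ 0 := fun hν =>
  (measure_ball_pos μ a hr).ne' <| withDensity_absolutelyContinuous'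
    h.measurable.coe_nnreal_ennreal.aemeasurable
    (h.ae_ne_zero.mono fun _ => ENNReal.coe_ne_zero.2) hν

variable [OpensMeasurableSpace X] [ProperSpace X] [IsFiniteMeasureOnCompacts μ]

lemma weightedMeasure_ball_mul_rpow_le (h : IsApWeight p C μ W) (a : X) {r : ℝ} (hr : 0 < r) :
    weightedMeasure μ W (ball a r) *
        weightedMeasure μ (dualWeight p W) (ball a r) ^ (p - 1) ≤ C * μ (ball a r) ^ p := by
  have hp₁ : 0 < p - 1 := sub_pos.2 h.one_lt
  have hμ₀ : μ (ball a r) ≠ 0 := (measure_ball_pos μ a hr).ne'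
  have hμ : μ (ball a r) ≠ ⊤ := measure_ball_lt_top.ne
  calc weightedMeasure μ W (ball a r) * weightedMeasure μ (dualWeight p W) (ball a r) ^ (p - 1)
      = (⨍⁻ x in ball a r, W x ∂μ) * (⨍⁻ x in ball a r, dualWeight p W x ∂μ) ^ (p - 1) *
          (μ (ball a r) * μ (ball a r) ^ (p - 1)) := by
        rw [withDensity_apply _ measurableSet_ball, withDensity_apply _ measurableSet_ball,
          ← measure_mul_setLAverage _ hμ, ← measure_mul_setLAverage _ hμ,
          ENNReal.mul_rpow_of_nonneg _ _ hp₁.le]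
        ring
    _ ≤ C * μ (ball a r) ^ p := by
        conv_rhs => rw [← add_sub_cancel 1 p, ENNReal.rpow_add _ _ hμ₀ hμ, ENNReal.rpow_one]
        gcongr
        exact h.laverage_mul_rpow_le a r hr

lemma weightedMeasure_dualWeight_ball_ne_top (h : IsApWeight p C μ W) (a : X) {r : ℝ}
    (hr : 0 < r) : weightedMeasure μ (dualWeight p W) (ball a r) ≠ ⊤ := by
  intro hσ
  have hp : 0 < p := zero_lt_one.trans h.one_lt
  refine (h.weightedMeasure_ball_mul_rpow_le a hr).not_gt ?_
  rw [hσ, ENNReal.top_rpow_of_pos (sub_pos.2 h.one_lt),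
    ENNReal.mul_top (h.weightedMeasure_ball_ne_zero a hr)]
  exact ENNReal.mul_lt_top ENNReal.coe_lt_top
    (ENNReal.rpow_lt_top_of_nonneg hp.le measure_ball_lt_top.ne)

lemma weightedMeasure_ball_mul_lintegral_rpow_le (h : IsApWeight p C μ W) {f : X → ℝ≥0∞}
    (hf : Measurable f) (a : X) {r : ℝ} (hr : 0 < r) :
    weightedMeasure μ W (ball a r) * (∫⁻ x in ball a r, f x ∂μ) ^ p ≤
      C * μ (ball a r) ^ p * ∫⁻ x in ball a r, f x ^ p ∂weightedMeasure μ W := by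
  have hholder := lintegral_rpow_le_mul_dualWeight_rpow h.measurable
    (ae_restrict_of_ae h.ae_ne_zero) h.one_lt hf (μ := μ.restrict (ball a r))
  rw [← restrict_weightedMeasure measurableSet_ball,
    ← withDensity_apply (fun x => (dualWeight p W x : ℝ≥0∞)) measurableSet_ball] at hholder
  calc weightedMeasure μ W (ball a r) * (∫⁻ x in ball a r, f x ∂μ) ^ p
      ≤ weightedMeasure μ W (ball a r) * ((∫⁻ x in ball a r, f x ^ p ∂weightedMeasure μ W) *
          weightedMeasure μ (dualWeight p W) (ball a r) ^ (p - 1)) := by gcongr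
    _ = weightedMeasure μ W (ball a r) * weightedMeasure μ (dualWeight p W) (ball a r) ^ (p - 1) *
          ∫⁻ x in ball a r, f x ^ p ∂weightedMeasure μ W := by ring
    _ ≤ C * μ (ball a r) ^ p * ∫⁻ x in ball a r, f x ^ p ∂weightedMeasure μ W := by
        gcongr ?_ * _
        exact h.weightedMeasure_ball_mul_rpow_le a hr

lemma laverage_rpow_le (h : IsApWeight p C μ W) {f : X → ℝ≥0∞} (hf : Measurable f) (a : X) {r : ℝ}
    (hr : 0 < r) :
    (⨍⁻ x in ball a r, f x ∂μ) ^ p ≤ C * ⨍⁻ x in ball a r, f x ^ p ∂weightedMeasure μ W := by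
  have hp₀ : 0 < p := zero_lt_one.trans h.one_lt
  have hμ₀ : μ (ball a r) ^ p ≠ 0 :=
    (ENNReal.rpow_pos (measure_ball_pos μ a hr) measure_ball_lt_top.ne).ne'
  have hμ : μ (ball a r) ^ p ≠ ⊤ := ENNReal.rpow_ne_top_of_nonneg hp₀.le measure_ball_lt_top.ne
  rw [setLAverage_eq, setLAverage_eq, ENNReal.div_rpow_of_nonneg _ _ hp₀.le,
    ENNReal.div_le_iff hμ₀ hμ, ← mul_div_assoc, ← ENNReal.mul_div_right_comm,
    ENNReal.le_div_iff_mul_le (.inl (h.weightedMeasure_ball_ne_zero a hr))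
      (.inl (h.weightedMeasure_ball_ne_top a r)), mul_comm, mul_right_comm]
  exact h.weightedMeasure_ball_mul_lintegral_rpow_le hf a hr

lemma weightedMeasure_ball_mul_measure_rpow_le (h : IsApWeight p C μ W) {s : Set X}
    (hs : MeasurableSet s) {a : X} {r : ℝ} (hr : 0 < r) (hsub : s ⊆ ball a r) :
    weightedMeasure μ W (ball a r) * μ s ^ p ≤ C * μ (ball a r) ^ p * weightedMeasure μ W s := by
  have hpow (x : X) : s.indicator (1 : X → ℝ≥0∞) x ^ p = s.indicator 1 x := by
    by_cases hx : x ∈ s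
    · simp [indicator_of_mem hx]
    · simp [indicator_of_notMem hx, zero_lt_one.trans h.one_lt]
  have hindicator (ρ : Measure X) : ∫⁻ x in ball a r, s.indicator 1 x ∂ρ = ρ s := by
    rw [lintegral_indicator_one hs, Measure.restrict_apply hs, inter_eq_left.2 hsub]
  simpa only [hpow, hindicator] using
    h.weightedMeasure_ball_mul_lintegral_rpow_le (measurable_one.indicator hs) a hr

lemma measure_ball_mul_lintegral_ball_rpow_le (h : IsApWeight p C μ W) (f : X → ℝ≥0∞) (x : X)
    {r : ℝ} (hr : 0 < r) :
    μ (ball x r) * (∫⁻ y in ball x r, f y ∂μ) ^ (p - 1) ≤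
      C * μ (ball x (3 * r)) ^ p * centeredMaximal (weightedMeasure μ W) (fun y =>
        centeredMaximal (weightedMeasure μ (dualWeight p W)) (fun z => f z / dualWeight p W z) y ^
          (p - 1) / W y) x := by
  set ν := weightedMeasure μ W
  set σ := weightedMeasure μ (dualWeight p W)
  set F := centeredMaximal σ fun z => f z / dualWeight p W z
  have hp₁ : 0 < p - 1 := sub_pos.2 h.one_lt
  have hr₃ : 0 < 3 * r := by positivity
  have hW₀ := ae_restrict_of_ae (s := ball x r) h.ae_ne_zero
  have hlower : ∀ y ∈ ball x r,
      (∫⁻ z in ball x r, f z ∂μ) ^ (p - 1) ≤ σ (ball x (3 * r)) ^ (p - 1) * F y ^ (p - 1) := by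
    intro y hy
    rw [← ENNReal.mul_rpow_of_nonneg _ _ hp₁.le,
      ← lintegral_weightedMeasure_div (measurable_dualWeight (p := p) h.measurable)
        (hW₀.mono fun _ => dualWeight_ne_zero), ← restrict_weightedMeasure measurableSet_ball]
    gcongr
    exact lintegral_ball_le_mul_centeredMaximal _ _ hy
      (h.weightedMeasure_dualWeight_ball_ne_top x hr₃)
  calc μ (ball x r) * (∫⁻ y in ball x r, f y ∂μ) ^ (p - 1)
      = ∫⁻ _ in ball x r, (∫⁻ z in ball x r, f z ∂μ) ^ (p - 1) ∂μ := by
        rw [setLIntegral_const, mul_comm]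
    _ ≤ ∫⁻ y in ball x r, σ (ball x (3 * r)) ^ (p - 1) * F y ^ (p - 1) ∂μ :=
        setLIntegral_mono' measurableSet_ball hlower
    _ = σ (ball x (3 * r)) ^ (p - 1) * ∫⁻ y in ball x r, F y ^ (p - 1) / W y ∂ν := by
        rw [lintegral_const_mul' _ _ (ENNReal.rpow_ne_top_of_nonneg hp₁.le
            (h.weightedMeasure_dualWeight_ball_ne_top x hr₃)),
          restrict_weightedMeasure measurableSet_ball,
          lintegral_weightedMeasure_div h.measurable hW₀]
    _ ≤ σ (ball x (3 * r)) ^ (p - 1) * (ν (ball x (3 * r)) *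
          centeredMaximal ν (fun y => F y ^ (p - 1) / W y) x) := by
        gcongr
        exact lintegral_ball_le_mul_centeredMaximal ν _ (mem_ball_self hr)
          (h.weightedMeasure_ball_ne_top x _)
    _ ≤ C * μ (ball x (3 * r)) ^ p * centeredMaximal ν (fun y => F y ^ (p - 1) / W y) x := by
        rw [← mul_assoc, mul_comm (_ ^ _)]
        gcongr ?_ * _
        exact h.weightedMeasure_ball_mul_rpow_le x hr₃

end IsApWeight

end PseudoMetricSpace

section NormedSpace
variable {E : Type*} [NormedAddCommGroup E] [NormedSpace ℝ E] [FiniteDimensional ℝ E]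
  [MeasurableSpace E] [BorelSpace E]

open Module (finrank)

lemma addHaar_ball_mul_eq (μ : Measure E) [μ.IsAddHaarMeasure] (x y : E) {c : ℝ} (hc : 0 < c)
    (r : ℝ) : μ (ball x (c * r)) = ENNReal.ofReal (c ^ finrank ℝ E) * μ (ball y r) := by
  rw [Measure.addHaar_ball_mul_of_pos μ x hc, Measure.addHaar_ball_center μ y]

lemma centeredMaximal_le_max_indicator (μ : Measure E) [μ.IsAddHaarMeasure] {f : E → ℝ≥0∞}
    {a x : E} {r : ℝ} (hx : x ∈ ball a r) {A : ℝ≥0∞}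
    (hA : ∀ t, r < t → ⨍⁻ y in ball a t, f y ∂μ ≤ A) :
    centeredMaximal μ f x ≤ max (centeredMaximal μ ((ball a (2 * r)).indicator f) x)
      (ENNReal.ofReal (2 ^ finrank ℝ E) * A) := by
  have hxa : dist x a < r := hx
  refine iSup₂_le fun s hs => ?_
  rcases le_or_gt s r with hsr | hrs
  · have hsub : ball x s ⊆ ball a (2 * r) := ball_subset_ball' (by linarith)
    have hnear : ⨍⁻ y in ball x s, f y ∂μ =
        ⨍⁻ y in ball x s, (ball a (2 * r)).indicator f y ∂μ :=
      setLAverage_congr_fun measurableSet_ball fun y hy => (indicator_of_mem (hsub hy) f).symm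
    exact le_max_of_le_left (hnear ▸ laverage_ball_le_centeredMaximal μ _ x hs)
  · have hsub : ball x s ⊆ ball a (2 * s) := ball_subset_ball' (by linarith)
    refine le_max_of_le_right ?_
    calc ⨍⁻ y in ball x s, f y ∂μ
        ≤ (∫⁻ y in ball a (2 * s), f y ∂μ) / μ (ball x s) := by rw [setLAverage_eq]; gcongr
      _ ≤ ENNReal.ofReal (2 ^ finrank ℝ E) * A := by
          refine ENNReal.div_le_of_le_mul ?_
          rw [← measure_mul_setLAverage _ measure_ball_lt_top.ne,
            addHaar_ball_mul_eq μ a x two_pos, mul_right_comm]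
          gcongr
          exact hA _ (by linarith)

namespace IsApWeight

variable {p : ℝ} {C : ℝ≥0} {μ : Measure E} [μ.IsAddHaarMeasure] {W : E → ℝ≥0}

lemma weightedMeasure_ball_two_mul_le (h : IsApWeight p C μ W) (a : E) {r : ℝ} (hr : 0 < r) :
    weightedMeasure μ W (ball a (2 * r)) ≤
      C * ENNReal.ofReal (2 ^ finrank ℝ E) ^ p * weightedMeasure μ W (ball a r) := by
  have hp₀ : 0 < p := zero_lt_one.trans h.one_lt
  have hμ₀ : μ (ball a r) ^ p ≠ 0 :=
    (ENNReal.rpow_pos (measure_ball_pos μ a hr) measure_ball_lt_top.ne).ne'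
  have hμ : μ (ball a r) ^ p ≠ ⊤ := ENNReal.rpow_ne_top_of_nonneg hp₀.le measure_ball_lt_top.ne
  have hball := h.weightedMeasure_ball_mul_measure_rpow_le measurableSet_ball (mul_pos two_pos hr)
    (ball_subset_ball (by linarith) : ball a r ⊆ ball a (2 * r))
  rw [addHaar_ball_mul_eq μ a a two_pos r, ENNReal.mul_rpow_of_nonneg _ _ hp₀.le] at hball
  refine (ENNReal.mul_le_mul_iff_left hμ₀ hμ).1 (hball.trans_eq ?_)
  ring

lemma centeredMaximal_rpow_le (h : IsApWeight p C μ W) (f : E → ℝ≥0∞) (x : E) :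
    centeredMaximal μ f x ^ (p - 1) ≤
      C * ENNReal.ofReal (3 ^ finrank ℝ E) ^ p * centeredMaximal (weightedMeasure μ W) (fun y =>
        centeredMaximal (weightedMeasure μ (dualWeight p W)) (fun z => f z / dualWeight p W z) y ^
          (p - 1) / W y) x := by
  have hp₀ : 0 < p := zero_lt_one.trans h.one_lt
  have hp₁ : 0 < p - 1 := sub_pos.2 h.one_lt
  rw [← ENNReal.le_rpow_inv_iff hp₁]
  refine iSup₂_le fun r hr => (ENNReal.le_rpow_inv_iff hp₁).2 ?_
  have hμ₀ : μ (ball x r) ≠ 0 := (measure_ball_pos μ x hr).ne'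
  have hμ : μ (ball x r) ≠ ⊤ := measure_ball_lt_top.ne
  have hball := h.measure_ball_mul_lintegral_ball_rpow_le f x hr
  rw [addHaar_ball_mul_eq μ x x three_pos r, ENNReal.mul_rpow_of_nonneg _ _ hp₀.le] at hball
  rw [setLAverage_eq, ENNReal.div_rpow_of_nonneg _ _ hp₁.le]
  refine ENNReal.div_le_of_le_mul ((ENNReal.mul_le_mul_iff_right hμ₀ hμ).1 (hball.trans_eq ?_))
  rw [show μ (ball x r) ^ p = μ (ball x r) * μ (ball x r) ^ (p - 1) by
    conv_lhs => rw [← add_sub_cancel 1 p, ENNReal.rpow_add _ _ hμ₀ hμ, ENNReal.rpow_one]]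
  ring

lemma exists_lintegral_centeredMaximal_dualWeight_rpow_le (h : IsApWeight p C μ W) :
    ∃ K : ℝ≥0, ∀ f : E → ℝ≥0∞, Measurable f →
      ∫⁻ x, centeredMaximal (weightedMeasure μ W) (fun y =>
          centeredMaximal (weightedMeasure μ (dualWeight p W)) (fun z => f z / dualWeight p W z) y ^
            (p - 1) / W y) x ^ (p / (p - 1)) ∂weightedMeasure μ W ≤
        K * ∫⁻ x, f x ^ p ∂weightedMeasure μ W := by
  have hq : 1 < p / (p - 1) := (one_lt_div (sub_pos.2 h.one_lt)).2 (by linarith)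
  obtain ⟨K₁, hK₁⟩ := _root_.exists_lintegral_centeredMaximal_rpow_le E hq
  obtain ⟨K₂, hK₂⟩ := _root_.exists_lintegral_centeredMaximal_rpow_le E h.one_lt
  have hS := measurable_dualWeight (p := p) h.measurable
  refine ⟨K₁ * K₂, fun f hf => ?_⟩
  set ν := weightedMeasure μ W
  set σ := weightedMeasure μ (dualWeight p W)
  let F := centeredMaximal σ fun z => f z / dualWeight p W z
  have hF : Measurable F := measurable_centeredMaximal (hf.div hS.coe_nnreal_ennreal)
  calc ∫⁻ x, centeredMaximal ν (fun y => F y ^ (p - 1) / W y) x ^ (p / (p - 1)) ∂ν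
      ≤ K₁ * ∫⁻ x, (F x ^ (p - 1) / W x) ^ (p / (p - 1)) ∂ν :=
        hK₁ ν _ ((hF.pow_const _).div h.measurable.coe_nnreal_ennreal)
    _ = K₁ * ∫⁻ x, F x ^ p ∂σ := by
        rw [lintegral_rpow_div_weight_rpow h.measurable h.ae_ne_zero h.one_lt]
    _ ≤ K₁ * (K₂ * ∫⁻ x, (f x / dualWeight p W x) ^ p ∂σ) := by
        gcongr
        exact hK₂ σ _ (hf.div hS.coe_nnreal_ennreal)
    _ = (K₁ * K₂ : ℝ≥0) * ∫⁻ x, f x ^ p ∂ν := by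
        rw [lintegral_div_dualWeight_rpow h.measurable h.ae_ne_zero h.one_lt, ENNReal.coe_mul,
          mul_assoc]

lemma exists_lintegral_centeredMaximal_rpow_le (h : IsApWeight p C μ W) :
    ∃ K : ℝ≥0, ∀ f : E → ℝ≥0∞, Measurable f →
      ∫⁻ x, centeredMaximal μ f x ^ p ∂weightedMeasure μ W ≤
        K * ∫⁻ x, f x ^ p ∂weightedMeasure μ W := by
  have hp₀ : 0 < p := zero_lt_one.trans h.one_lt
  have hp₁ : 0 < p - 1 := sub_pos.2 h.one_lt
  have hq : 0 ≤ p / (p - 1) := by positivity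
  obtain ⟨K, hK⟩ := h.exists_lintegral_centeredMaximal_dualWeight_rpow_le
  have hA : (C * ENNReal.ofReal (3 ^ finrank ℝ E) ^ p) ^ (p / (p - 1)) ≠ ⊤ := by finiteness
  lift (C * ENNReal.ofReal (3 ^ finrank ℝ E) ^ p) ^ (p / (p - 1)) to ℝ≥0 using hA with A hA_eq
  refine ⟨A * K, fun f hf => ?_⟩
  rw [ENNReal.coe_mul, mul_assoc]
  refine le_trans ?_ (mul_le_mul_right (hK f hf) _)
  rw [← lintegral_const_mul' _ _ ENNReal.coe_ne_top]
  refine lintegral_mono fun x => ?_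
  rw [hA_eq, ← ENNReal.mul_rpow_of_nonneg _ _ hq,
    show centeredMaximal μ f x ^ p = (centeredMaximal μ f x ^ (p - 1)) ^ (p / (p - 1)) by
      rw [← ENNReal.rpow_mul, mul_div_cancel₀ _ hp₁.ne']]
  gcongr
  exact h.centeredMaximal_rpow_le f x

lemma lintegral_indicator_ball_two_mul_rpow_le (h : IsApWeight p C μ W) (f : E → ℝ≥0∞) (a : E)
    {r : ℝ} (hr : 0 < r) :
    ∫⁻ x, (ball a (2 * r)).indicator f x ^ p ∂weightedMeasure μ W ≤
      C * ENNReal.ofReal (2 ^ finrank ℝ E) ^ p * weightedMeasure μ W (ball a r) *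
        ⨍⁻ x in ball a (2 * r), f x ^ p ∂weightedMeasure μ W := by
  have hpow (x : E) : (ball a (2 * r)).indicator f x ^ p =
      (ball a (2 * r)).indicator (fun y => f y ^ p) x := by
    by_cases hx : x ∈ ball a (2 * r)
    · simp only [indicator_of_mem hx]
    · simp only [indicator_of_notMem hx, ENNReal.zero_rpow_of_pos (zero_lt_one.trans h.one_lt)]
  simp only [hpow]
  rw [lintegral_indicator measurableSet_ball,
    ← measure_mul_setLAverage _ (h.weightedMeasure_ball_ne_top a (2 * r))]
  gcongr
  exact h.weightedMeasure_ball_two_mul_le a hr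

lemma centeredMaximal_rpow_le_indicator_add (h : IsApWeight p C μ W) {f : E → ℝ≥0∞}
    (hf : Measurable f) {a x : E} {r : ℝ} (hx : x ∈ ball a r) {S : ℝ≥0∞}
    (hS : ∀ t, r < t → ⨍⁻ y in ball a t, f y ^ p ∂weightedMeasure μ W ≤ S) :
    centeredMaximal μ f x ^ p ≤ centeredMaximal μ ((ball a (2 * r)).indicator f) x ^ p +
      ENNReal.ofReal (2 ^ finrank ℝ E) ^ p * (C * S) := by
  have hp₀ : 0 < p := zero_lt_one.trans h.one_lt
  have hfar (t : ℝ) (ht : r < t) : ⨍⁻ y in ball a t, f y ∂μ ≤ (C * S) ^ p⁻¹ := by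
    rw [ENNReal.le_rpow_inv_iff hp₀]
    refine (h.laverage_rpow_le hf a ((pos_of_mem_ball hx).trans ht)).trans ?_
    gcongr
    exact hS t ht
  refine (ENNReal.rpow_le_rpow (centeredMaximal_le_max_indicator μ hx hfar) hp₀.le).trans ?_
  rw [(ENNReal.monotone_rpow_of_nonneg hp₀.le).map_max, ENNReal.mul_rpow_of_nonneg _ _ hp₀.le,
    ENNReal.rpow_inv_rpow hp₀.ne']
  exact max_le_add_of_nonneg zero_le zero_le

lemma exists_laverage_centeredMaximal_rpow_le (h : IsApWeight p C μ W) :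
    ∃ L : ℝ≥0, ∀ f : E → ℝ≥0∞, Measurable f → ∀ a r, 0 < r →
      ⨍⁻ x in ball a r, centeredMaximal μ f x ^ p ∂weightedMeasure μ W ≤
        L * ⨆ (t : ℝ) (_ : r < t), ⨍⁻ x in ball a t, f x ^ p ∂weightedMeasure μ W := by
  obtain ⟨K, hK⟩ := h.exists_lintegral_centeredMaximal_rpow_le
  have hD : ENNReal.ofReal (2 ^ finrank ℝ E) ^ p ≠ ⊤ := by
    have := zero_lt_one.trans h.one_lt
    finiteness
  lift ENNReal.ofReal (2 ^ finrank ℝ E) ^ p to ℝ≥0 using hD with D hD_eq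
  refine ⟨K * (C * D) + D * C, fun f hf a r hr => ?_⟩
  set ν := weightedMeasure μ W
  set S := ⨆ (t : ℝ) (_ : r < t), ⨍⁻ x in ball a t, f x ^ p ∂ν
  have hS (t : ℝ) (ht : r < t) : ⨍⁻ x in ball a t, f x ^ p ∂ν ≤ S :=
    le_iSup₂ (f := fun (t : ℝ) (_ : r < t) => ⨍⁻ x in ball a t, f x ^ p ∂ν) t ht
  let g := (ball a (2 * r)).indicator f
  have hnear : ∫⁻ x, centeredMaximal μ g x ^ p ∂ν ≤ K * (C * D * ν (ball a r) * S) := by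
    refine (hK g (hf.indicator measurableSet_ball)).trans ?_
    gcongr
    refine (h.lintegral_indicator_ball_two_mul_rpow_le f a hr).trans ?_
    rw [hD_eq]
    gcongr
    exact hS _ (by linarith)
  rw [setLAverage_eq]
  refine ENNReal.div_le_of_le_mul ?_
  calc ∫⁻ x in ball a r, centeredMaximal μ f x ^ p ∂ν
      ≤ ∫⁻ x in ball a r, (centeredMaximal μ g x ^ p + D * (C * S)) ∂ν :=
        setLIntegral_mono' measurableSet_ball fun x hx =>
          hD_eq ▸ h.centeredMaximal_rpow_le_indicator_add hf hx hS
    _ = ∫⁻ x in ball a r, centeredMaximal μ g x ^ p ∂ν + D * (C * S) * ν (ball a r) := by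
        rw [lintegral_add_right _ measurable_const, setLIntegral_const]
    _ ≤ K * (C * D * ν (ball a r) * S) + D * (C * S) * ν (ball a r) := by
        gcongr
        exact (setLIntegral_le_lintegral _ _).trans hnear
    _ = (K * (C * D) + D * C : ℝ≥0) * S * ν (ball a r) := by
        push_cast
        ring

end IsApWeight

end NormedSpace

end ApWeight

section Morrey

variable {n : ℕ} {p : ℝ} {w : EuclideanSpace ℝ (Fin n) → ℝ}

lemma HLMax_eq_centeredMaximal (f : EuclideanSpace ℝ (Fin n) → ℝ) :
    HLMax f = centeredMaximal volume fun x => ENNReal.ofReal |f x| := by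
  funext x
  simp only [HLMax, centeredMaximal, setLAverage_eq, iSup_subtype', div_eq_mul_inv,
    mul_comm (volume _)⁻¹]
  rfl

lemma IsWeight.exists_isApWeight (hw : IsWeight w) (hAp : MuckAp p w) (hp : 1 < p) :
    ∃ C : ℝ≥0, IsApWeight p C volume fun x => (w x).toNNReal := by
  obtain ⟨hw_meas, hw_nonneg, hw_loc, hw_pos⟩ := hw
  obtain ⟨C, -, hC⟩ := hAp
  refine ⟨C.toNNReal, hp, hw_meas.real_toNNReal, ?_, fun a r => ?_, fun a r hr => ?_⟩
  · exact hw_pos.mono fun x hx => (Real.toNNReal_pos.2 hx).ne'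
  · exact ((hw_loc.integrableOn_isCompact (isCompact_closedBall a r)).mono_set
      ball_subset_closedBall).lintegral_lt_top.ne
  · have hdual (x : EuclideanSpace ℝ (Fin n)) : (dualWeight p (fun x => (w x).toNNReal) x : ℝ≥0∞) =
        ENNReal.ofReal (w x ^ (-(1 / (p - 1)))) := by
      rw [dualWeight, ← Real.toNNReal_rpow_of_nonneg (hw_nonneg x)]
      rfl
    simp only [setLAverage_eq, hdual, div_eq_mul_inv, mul_comm _ (volume _)⁻¹]
    exact hC a r hr

lemma morreyNormE_eq_iSup_laverage (hw : Measurable w) (hp : 0 < p)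
    (ψ : EuclideanSpace ℝ (Fin n) → ℝ → ℝ) (g : EuclideanSpace ℝ (Fin n) → ℝ≥0∞) :
    morreyNormE p w ψ g = ⨆ (a : EuclideanSpace ℝ (Fin n)) (r : ℝ) (_ : 0 < r),
      (ENNReal.ofReal (ψ a r))⁻¹ *
        (⨍⁻ x in ball a r, g x ^ p ∂weightedMeasure volume fun x => (w x).toNNReal) ^ (1 / p) := by
  have hwSet (s : Set (EuclideanSpace ℝ (Fin n))) (hs : MeasurableSet s) :
      wSet w s = weightedMeasure volume (fun x => (w x).toNNReal) s :=
    (withDensity_apply _ hs).symm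
  have hwLpE (s : Set (EuclideanSpace ℝ (Fin n))) (hs : MeasurableSet s) : wLpE p w g s =
      (∫⁻ x in s, g x ^ p ∂weightedMeasure volume fun x => (w x).toNNReal) ^ (1 / p) := by
    rw [restrict_weightedMeasure hs, lintegral_weightedMeasure hw.real_toNNReal]
    simp only [wLpE, mul_comm (g _ ^ p), ENNReal.ofReal]
  simp only [morreyNormE, iSup_subtype, mem_Ioi]
  refine iSup_congr fun a => iSup_congr fun r => iSup_congr fun _ => ?_
  rw [hwSet _ measurableSet_ball, hwLpE _ measurableSet_ball, setLAverage_eq,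
    ENNReal.div_rpow_of_nonneg _ _ (one_div_pos.2 hp).le, ENNReal.rpow_neg,
    ENNReal.div_eq_inv_mul, mul_assoc]

lemma morreyNormE_le_of_laverage_le (hw : Measurable w) (hp : 0 < p)
    {ψ₁ ψ₂ : EuclideanSpace ℝ (Fin n) → ℝ → ℝ} (hψ₁ : ∀ a r, 0 < r → 0 < ψ₁ a r)
    (hψ₂ : ∀ a r, 0 < r → 0 < ψ₂ a r) {C : ℝ}
    (hψ : ∀ a r, 0 < r → ∀ t, r < t → ψ₁ a t ≤ C * ψ₂ a r)
    {f g : EuclideanSpace ℝ (Fin n) → ℝ≥0∞} {L : ℝ≥0∞}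
    (hfg : ∀ a r, 0 < r →
      ⨍⁻ x in ball a r, g x ^ p ∂weightedMeasure volume (fun x => (w x).toNNReal) ≤
        L * ⨆ (t : ℝ) (_ : r < t),
          ⨍⁻ x in ball a t, f x ^ p ∂weightedMeasure volume fun x => (w x).toNNReal) :
    morreyNormE p w ψ₂ g ≤ L ^ (1 / p) * ENNReal.ofReal C * morreyNormE p w ψ₁ f := by
  have hp' : 0 ≤ 1 / p := by positivity
  set N := morreyNormE p w ψ₁ f with hN
  rw [morreyNormE_eq_iSup_laverage hw hp] at hN ⊢
  set ν := weightedMeasure volume fun x => (w x).toNNReal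
  refine iSup_le fun a => iSup₂_le fun r hr => ?_
  have hψ₂r : ENNReal.ofReal (ψ₂ a r) ≠ 0 := by simpa using hψ₂ a r hr
  have havg (t : ℝ) (ht : r < t) :
      (⨍⁻ x in ball a t, f x ^ p ∂ν) ^ (1 / p) ≤ ENNReal.ofReal (C * ψ₂ a r) * N := by
    have hψ₁t : ENNReal.ofReal (ψ₁ a t) ≠ 0 := by simpa using hψ₁ a t (hr.trans ht)
    have hnorm : (ENNReal.ofReal (ψ₁ a t))⁻¹ * (⨍⁻ x in ball a t, f x ^ p ∂ν) ^ (1 / p) ≤ N :=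
      hN ▸ le_iSup_of_le a (le_iSup₂_of_le t (hr.trans ht) le_rfl)
    rw [mul_comm, ← div_eq_mul_inv, ENNReal.div_le_iff hψ₁t ENNReal.ofReal_ne_top] at hnorm
    refine hnorm.trans ?_
    rw [mul_comm]
    gcongr
    exact hψ a r hr t ht
  have hsup : (⨆ (t : ℝ) (_ : r < t), ⨍⁻ x in ball a t, f x ^ p ∂ν) ^ (1 / p) ≤
      ENNReal.ofReal (C * ψ₂ a r) * N := by
    rw [one_div, ENNReal.rpow_inv_le_iff hp]
    refine iSup₂_le fun t ht => ?_
    rw [← ENNReal.rpow_inv_le_iff hp, ← one_div]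
    exact havg t ht
  calc (ENNReal.ofReal (ψ₂ a r))⁻¹ * (⨍⁻ x in ball a r, g x ^ p ∂ν) ^ (1 / p)
      ≤ (ENNReal.ofReal (ψ₂ a r))⁻¹ * (L ^ (1 / p) * (ENNReal.ofReal (C * ψ₂ a r) * N)) := by
        gcongr _ * ?_
        refine (ENNReal.rpow_le_rpow (hfg a r hr) hp').trans ?_
        rw [ENNReal.mul_rpow_of_nonneg _ _ hp']
        gcongr
    _ = (ENNReal.ofReal (ψ₂ a r))⁻¹ * ENNReal.ofReal (ψ₂ a r) *
          (L ^ (1 / p) * ENNReal.ofReal C * N) := by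
        rw [ENNReal.ofReal_mul' (hψ₂ a r hr).le]
        ring
    _ = L ^ (1 / p) * ENNReal.ofReal C * N := by
        rw [ENNReal.inv_mul_cancel hψ₂r ENNReal.ofReal_ne_top, one_mul]

end Morrey

/-- Let `1 < p < ∞`, `w ∈ A_p`, and let `ψ₁, ψ₂` be positive functions on
`ℝⁿ × (0,∞)` with `sup_{r<t<∞} ψ₁(a,t) ≤ C·ψ₂(a,r)` for all `(a,r)`. Then the
Hardy–Littlewood maximal operator is bounded from `M^{p,w}_{ψ₁}` to `M^{p,w}_{ψ₂}`. -/
theorem statement6 {n : ℕ} (p : ℝ) (hp : 1 < p)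
    (w : EuclideanSpace ℝ (Fin n) → ℝ) (hw : IsWeight w) (hAp : MuckAp p w)
    (ψ₁ ψ₂ : EuclideanSpace ℝ (Fin n) → ℝ → ℝ)
    (hψ₁ : ∀ a r, 0 < r → 0 < ψ₁ a r) (hψ₂ : ∀ a r, 0 < r → 0 < ψ₂ a r)
    (C : ℝ) (hC : 0 < C)
    (hcond : ∀ (a : EuclideanSpace ℝ (Fin n)) (r : ℝ), 0 < r →
      ∀ t, r < t → ψ₁ a t ≤ C * ψ₂ a r) :
    ∃ C' : ℝ, 0 < C' ∧ ∀ f : EuclideanSpace ℝ (Fin n) → ℝ,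
      MemLocWLp p w f → morreyNorm p w ψ₁ f < ⊤ →
      morreyNormE p w ψ₂ (HLMax f) ≤ ENNReal.ofReal C' * morreyNorm p w ψ₁ f := by
  have hp₀ : 0 < p := zero_lt_one.trans hp
  obtain ⟨A, hA⟩ := hw.exists_isApWeight hAp hp
  obtain ⟨L, hL⟩ := hA.exists_laverage_centeredMaximal_rpow_le
  refine ⟨(L + 1 : ℝ≥0) ^ (1 / p) * C, by positivity, fun f hf _ => ?_⟩
  rw [HLMax_eq_centeredMaximal]
  refine (morreyNormE_le_of_laverage_le hw.1 hp₀ hψ₁ hψ₂ hcond fun a r hr =>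
    hL _ hf.1.abs.ennreal_ofReal a r hr).trans (mul_le_mul_left ?_ _)
  rw [ENNReal.ofReal_mul (by positivity), ← ENNReal.ofReal_rpow_of_nonneg NNReal.zero_le_coe
    (by positivity), ENNReal.ofReal_coe_nnreal]
  gcongr
  exact le_self_add
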